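/- Let k ≥ 1 and let G = (A, B, E) be a connected bipartite graph all of whose twin classes have size at most k, and suppose G has a twin-adapted A-partitioning cover of cost at most k. Then G has at most 4k^4 twin classes contained in B. -/

import Mathlib

/- Common framework: bipartite graphs on vertex set `ℕ` with side labels,
   edge editions, vertex splittings, and the bicluster-editing numbers. -/

namespace BCE

/-- A graph on a finite subset of `ℕ` equipped with a labelling of its
vertices into two sides `A` and `B`. -/
structure BGraph where
  A : Set ℕ
  B : Set ℕ
  finA : A.Finite
  finB : B.Finite
  Adj : ℕ → ℕ → Prop
  symm : ∀ u v, Adj u v → Adj v u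

/-- The vertex set of a graph. -/
def verts (G : BGraph) : Set ℕ := G.A ∪ G.B

/-- The open neighbourhood of a vertex. -/
def nbhd (G : BGraph) (v : ℕ) : Set ℕ := {u | G.Adj v u}

/-- `G = (A, B, E)` is bipartite: the sides are disjoint and every edge joins
a vertex of `A` with a vertex of `B`. -/
def Bipartite (G : BGraph) : Prop :=
  Disjoint G.A G.B ∧
    ∀ u v, G.Adj u v → (u ∈ G.A ∧ v ∈ G.B) ∨ (u ∈ G.B ∧ v ∈ G.A)

/-- A (bipartite) graph is a disjoint union of bicliques iff whenever
`a-b-c-d` is a walk, `a` and `d` are adjacent (equivalently, every connected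
component is a complete bipartite graph). -/
def IsBicliqueUnion (G : BGraph) : Prop :=
  ∀ a b c d, G.Adj a b → G.Adj b c → G.Adj c d → G.Adj a d

/-- The editing operations: deletion of an edge, addition of an edge, and
splitting of a vertex `v` into `v` and a fresh vertex `v'` whose
neighbourhoods `N1`, `N2` cover the neighbourhood of `v`. -/
inductive Op where
  | del : ℕ → ℕ → Op
  | add : ℕ → ℕ → Op
  | split : ℕ → ℕ → Set ℕ → Set ℕ → Op

/-- `op` is a vertex splitting. -/
def IsSplitOp : Op → Prop
  | Op.split _ _ _ _ => True
  | _ => False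

/-- `OpStep sA sB op G G'` : performing the single operation `op` on `G`
yields `G'`; vertex splittings are allowed on side `A` (resp. `B`) only if
`sA` (resp. `sB`) is `true`.  A copy created by a splitting is put on the
same side as the split vertex. -/
inductive OpStep (sA sB : Bool) : Op → BGraph → BGraph → Prop where
  | del {G G' : BGraph} {u v : ℕ}
      (h : G.Adj u v) (hA : G'.A = G.A) (hB : G'.B = G.B)
      (hadj : ∀ x y, G'.Adj x y ↔
        (G.Adj x y ∧ ¬((x = u ∧ y = v) ∨ (x = v ∧ y = u)))) :
      OpStep sA sB (Op.del u v) G G'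
  | add {G G' : BGraph} {u v : ℕ}
      (hu : u ∈ G.A) (hv : v ∈ G.B) (h : ¬ G.Adj u v)
      (hA : G'.A = G.A) (hB : G'.B = G.B)
      (hadj : ∀ x y, G'.Adj x y ↔
        (G.Adj x y ∨ (x = u ∧ y = v) ∨ (x = v ∧ y = u))) :
      OpStep sA sB (Op.add u v) G G'
  | split {G G' : BGraph} {v v' : ℕ} {N1 N2 : Set ℕ}
      (hside : (v ∈ G.A ∧ sA = true) ∨ (v ∈ G.B ∧ sB = true))
      (hfresh : v' ∉ verts G)
      (hcover : N1 ∪ N2 = nbhd G v)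
      (hA : v ∈ G.A → G'.A = insert v' G.A ∧ G'.B = G.B)
      (hB : v ∈ G.B → G'.A = G.A ∧ G'.B = insert v' G.B)
      (hadj : ∀ x y, G'.Adj x y ↔
        ((G.Adj x y ∧ x ≠ v ∧ y ≠ v) ∨ (x = v ∧ y ∈ N1) ∨ (y = v ∧ x ∈ N1) ∨
          (x = v' ∧ y ∈ N2) ∨ (y = v' ∧ x ∈ N2))) :
      OpStep sA sB (Op.split v v' N1 N2) G G'

/-- `ApplySeq sA sB L G G'` : applying the sequence of operations `L`
to `G` yields `G'`. -/
def ApplySeq (sA sB : Bool) : List Op → BGraph → BGraph → Prop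
  | [], G, G' => G' = G
  | op :: L, G, G'' => ∃ G', OpStep sA sB op G G' ∧ ApplySeq sA sB L G' G''

/-- The sequence `L` transforms `G` into a disjoint union of bicliques. -/
def Solves (sA sB : Bool) (L : List Op) (G : BGraph) : Prop :=
  ∃ G', ApplySeq sA sB L G G' ∧ IsBicliqueUnion G'

/-- `bcevs G` : the minimum length of a sequence of edge editions and vertex
splittings transforming `G` into a disjoint union of bicliques. -/
noncomputable def bcevs (G : BGraph) : ℕ :=
  sInf {n | ∃ L, L.length = n ∧ Solves true true L G}

/-- `bceovs G` (that is, `bceovs(G, A)`) : the minimum length of such a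
sequence in which vertex splittings are applied only to vertices of the side
`A` (and their copies, which are also on side `A`). -/
noncomputable def bceovs (G : BGraph) : ℕ :=
  sInf {n | ∃ L, L.length = n ∧ Solves true false L G}

/-- The subgraph of `G` induced by `S`. -/
def induce (G : BGraph) (S : Set ℕ) : BGraph where
  A := G.A ∩ S
  B := G.B ∩ S
  finA := G.finA.subset Set.inter_subset_left
  finB := G.finB.subset Set.inter_subset_left
  Adj := fun u v => G.Adj u v ∧ u ∈ S ∧ v ∈ S
  symm := fun u v h => ⟨G.symm u v h.1, h.2.2, h.2.1⟩

/-- `G` is a tree (as an abstract graph on its vertex set). -/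
def IsTreeB (G : BGraph) : Prop :=
  (SimpleGraph.induce (verts G) (SimpleGraph.fromRel G.Adj)).IsTree

/-- `G` is connected. -/
def ConnectedB (G : BGraph) : Prop :=
  (SimpleGraph.induce (verts G) (SimpleGraph.fromRel G.Adj)).Connected

/-- The set `S` induces a biclique in `G`: every vertex of `S` on side `A` is
adjacent to every vertex of `S` on side `B`. -/
def IsBicliqueOn (G : BGraph) (S : Set ℕ) : Prop :=
  ∀ u ∈ S ∩ G.A, ∀ v ∈ S ∩ G.B, G.Adj u v

/-- The set `S` induces a star in `G`: some centre `c ∈ S` is adjacent to all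
other vertices of `S`, and every edge inside `S` uses the centre. -/
def IsStarOn (G : BGraph) (S : Set ℕ) : Prop :=
  ∃ c ∈ S, (∀ v ∈ S, v ≠ c → G.Adj c v) ∧
    (∀ u ∈ S, ∀ v ∈ S, G.Adj u v → u = c ∨ v = c)

/-- An `A`-partitioning cover of `G`: a collection of subsets of `A ∪ B`
covering all vertices whose traces on `A` form a partition of `A` (every
vertex of `A` lies in a unique member of the collection). -/
def IsAPartCover (G : BGraph) (C : Set (Set ℕ)) : Prop :=
  (∀ X ∈ C, X ⊆ verts G) ∧
  (∀ v ∈ verts G, ∃ X ∈ C, v ∈ X) ∧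
  (∀ a ∈ G.A, ∃! X, X ∈ C ∧ a ∈ X)

/-- The cost of an `A`-partitioning cover: each `a ∈ A` lying in the unique
set `X ∈ C` costs `|(B ∩ X) \ N(a)| + |N(a) \ X|`; each `b ∈ B` lying in `j`
members of `C` costs `j - 1`. -/
noncomputable def coverCost (G : BGraph) (C : Set (Set ℕ)) : ℕ :=
  (∑ᶠ a ∈ G.A, ∑ᶠ X ∈ {X ∈ C | a ∈ X},
      (((G.B ∩ X) \ nbhd G a).ncard + ((nbhd G a) \ X).ncard)) +
  ∑ᶠ b ∈ G.B, ({X ∈ C | b ∈ X}.ncard - 1)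

/-- The twin class of a vertex: all vertices of `G` with the same open
neighbourhood. -/
def twinClass (G : BGraph) (v : ℕ) : Set ℕ :=
  {u ∈ verts G | nbhd G u = nbhd G v}

/-- The twin classes of `G`. -/
def twinClasses (G : BGraph) : Set (Set ℕ) :=
  {T | ∃ v ∈ verts G, T = twinClass G v}

/-- A cover is twin-adapted if every member contains each twin class either
entirely or not at all. -/
def TwinAdapted (G : BGraph) (C : Set (Set ℕ)) : Prop :=
  ∀ T ∈ twinClasses G, ∀ X ∈ C, T ∩ X = ∅ ∨ T ⊆ X

/-- `G` is a cycle with consecutive vertices `p 0, p 1, …, p (m-1)`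
(indices modulo `m`), the vertices of even index forming side `A`. -/
def IsCycleWith (G : BGraph) (p : ℕ → ℕ) (m : ℕ) : Prop :=
  (∀ i j, i < m → j < m → p i = p j → i = j) ∧
  G.A = p '' {i | i < m ∧ i % 2 = 0} ∧
  G.B = p '' {i | i < m ∧ i % 2 = 1} ∧
  (∀ x y, G.Adj x y ↔ ∃ i < m,
    (x = p i ∧ y = p ((i + 1) % m)) ∨ (y = p i ∧ x = p ((i + 1) % m)))

/-- `G` is a path with `l` edges and consecutive vertices `p 0, …, p l`,
the vertices of even index forming side `A`. -/
def IsPathWith (G : BGraph) (p : ℕ → ℕ) (l : ℕ) : Prop :=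
  (∀ i j, i ≤ l → j ≤ l → p i = p j → i = j) ∧
  G.A = p '' {i | i ≤ l ∧ i % 2 = 0} ∧
  G.B = p '' {i | i ≤ l ∧ i % 2 = 1} ∧
  (∀ x y, G.Adj x y ↔ ∃ i < l,
    (x = p i ∧ y = p (i + 1)) ∨ (y = p i ∧ x = p (i + 1)))

end BCE

namespace BCE


/-- `f` assigns to each vertex of `A` the unique member of `C` containing it. -/
def IsPartMap (G : BGraph) (C : Set (Set ℕ)) (f : ℕ → Set ℕ) : Prop :=
  ∀ a ∈ G.A, f a ∈ C ∧ a ∈ f a ∧ ∀ Y ∈ C, a ∈ Y → Y = f a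

/-- The vertices `a ∈ A` for which the pair `ab` is edited. -/
def editSet (G : BGraph) (f : ℕ → Set ℕ) (b : ℕ) : Set ℕ :=
  {a ∈ G.A | ¬(b ∈ f a ↔ G.Adj a b)}

/-- The number of splits of `b` plus the number of edited pairs containing `b`. -/
noncomputable def editWeight (G : BGraph) (C : Set (Set ℕ)) (f : ℕ → Set ℕ) (b : ℕ) : ℕ :=
  ({X ∈ C | b ∈ X}.ncard - 1) + (editSet G f b).ncard

/-- The neighbourhood of `b`, together with the traces on `A` of the members of `C` that contain
`b` or contain a vertex whose pair with `b` is edited. -/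
def nearbyTraces (G : BGraph) (C : Set (Set ℕ)) (f : ℕ → Set ℕ) (b : ℕ) : Set (Set ℕ) :=
  insert (nbhd G b) ((· ∩ G.A) '' ({X ∈ C | b ∈ X} ∪ f '' editSet G f b))

lemma IsAPartCover.exists_isPartMap {G : BGraph} {C : Set (Set ℕ)} (hC : IsAPartCover G C) :
    ∃ f, IsPartMap G C f := by
  have h : ∀ a, ∃ X, a ∈ G.A → X ∈ C ∧ a ∈ X ∧ ∀ Y ∈ C, a ∈ Y → Y = X := by
    intro a
    by_cases ha : a ∈ G.A
    · obtain ⟨X, ⟨hXC, haX⟩, hu⟩ := hC.2.2 a ha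
      exact ⟨X, fun _ => ⟨hXC, haX, fun Y hY haY => hu Y ⟨hY, haY⟩⟩⟩
    · exact ⟨∅, fun h => absurd h ha⟩
  choose f hf using h
  exact ⟨f, hf⟩

lemma IsAPartCover.finite {G : BGraph} {C : Set (Set ℕ)} (hC : IsAPartCover G C) : C.Finite :=
  (G.finA.union G.finB).finite_subsets.subset hC.1

lemma Bipartite.mem_A_of_adj {G : BGraph} (hbip : Bipartite G) {a b : ℕ} (hb : b ∈ G.B)
    (h : G.Adj a b) : a ∈ G.A := by
  rcases hbip.2 a b h with h | h
  · exact h.1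
  · exact absurd hb (Set.disjoint_left.1 hbip.1 h.2)

lemma Bipartite.mem_B_of_adj {G : BGraph} (hbip : Bipartite G) {a b : ℕ} (ha : a ∈ G.A)
    (h : G.Adj a b) : b ∈ G.B := by
  rcases hbip.2 a b h with h | h
  · exact h.2
  · exact absurd h.1 (Set.disjoint_left.1 hbip.1 ha)

lemma sum_editWeight_le_coverCost {G : BGraph} (hbip : Bipartite G) {C : Set (Set ℕ)}
    {f : ℕ → Set ℕ} (hf : IsPartMap G C f) :
    ∑ b ∈ G.finB.toFinset, editWeight G C f b ≤ coverCost G C := by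
  classical
  unfold coverCost editWeight
  rw [Finset.sum_add_distrib, add_comm, finsum_mem_eq_finite_toFinset_sum _ G.finA,
    finsum_mem_eq_finite_toFinset_sum _ G.finB]
  gcongr
  have hE : ∀ b, (editSet G f b).ncard =
      (G.finA.toFinset.bipartiteBelow (fun a b => ¬(b ∈ f a ↔ G.Adj a b)) b).card := by
    intro b
    rw [← Set.ncard_coe_finset]
    congr 1
    ext a
    simp [editSet, Finset.bipartiteBelow]
  simp_rw [hE]
  rw [← Finset.sum_card_bipartiteAbove_eq_sum_card_bipartiteBelow]
  refine Finset.sum_le_sum fun a ha => ?_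
  have haA : a ∈ G.A := by simpa using ha
  have hs : {X ∈ C | a ∈ X} = {f a} := by
    ext Y
    exact ⟨fun h => (hf a haA).2.2 Y h.1 h.2, by rintro rfl; exact ⟨(hf a haA).1, (hf a haA).2.1⟩⟩
  rw [hs, finsum_mem_singleton, ← Set.ncard_coe_finset]
  have hN : (nbhd G a).Finite := G.finB.subset fun b hb => hbip.mem_B_of_adj haA hb
  refine (Set.ncard_le_ncard ?_ ?_).trans (Set.ncard_union_le _ _)
  · intro b hb
    simp only [Finset.bipartiteAbove, Finset.coe_filter, Set.Finite.mem_toFinset,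
      Set.mem_ofPred_eq] at hb
    simp only [nbhd, Set.mem_union, Set.mem_sdiff, Set.mem_inter_iff, Set.mem_ofPred_eq]
    tauto
  · exact ((G.finB.inter_of_left _).sdiff).union hN.sdiff

lemma ncard_nearbyTraces_le {G : BGraph} {C : Set (Set ℕ)} (hC : C.Finite)
    (f : ℕ → Set ℕ) (b : ℕ) :
    (nearbyTraces G C f b).Finite ∧ (nearbyTraces G C f b).ncard ≤ editWeight G C f b + 2 := by
  have hE : (editSet G f b).Finite := G.finA.subset fun a ha => ha.1
  have hX : {X ∈ C | b ∈ X}.Finite := hC.subset fun X h => h.1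
  have hU := hX.union (hE.image f)
  refine ⟨(hU.image _).insert _, ?_⟩
  have h₁ := Set.ncard_insert_le (nbhd G b)
    ((· ∩ G.A) '' ({X ∈ C | b ∈ X} ∪ f '' editSet G f b))
  have h₂ := Set.ncard_image_le (f := (· ∩ G.A)) hU
  have h₃ := Set.ncard_union_le {X ∈ C | b ∈ X} (f '' editSet G f b)
  have h₄ := Set.ncard_image_le (f := f) hE
  unfold nearbyTraces editWeight
  omega

/-- The neighbourhood of a vertex of `B` of weight zero is the trace on `A` of the member of `C`
containing it. -/
lemma nbhd_eq_inter_of_editWeight_eq_zero {G : BGraph} (hbip : Bipartite G) {C : Set (Set ℕ)}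
    (hC : C.Finite) {f : ℕ → Set ℕ} (hf : IsPartMap G C f) {b : ℕ} (hb : b ∈ G.B)
    (h0 : editWeight G C f b = 0) {X : Set ℕ} (hX : X ∈ C) (hbX : b ∈ X) :
    nbhd G b = X ∩ G.A := by
  obtain ⟨h1, h2⟩ := Nat.add_eq_zero_iff.1 h0
  have hE : editSet G f b = ∅ :=
    (Set.ncard_eq_zero (G.finA.subset fun a ha => ha.1)).1 h2
  have hedit : ∀ a ∈ G.A, (b ∈ f a ↔ G.Adj a b) := by
    intro a ha
    by_contra h
    exact Set.notMem_empty a (hE ▸ ⟨ha, h⟩)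
  have huniq : ∀ Y ∈ C, b ∈ Y → Y = X := fun Y hY hbY =>
    (Set.ncard_le_one (hC.subset fun X h => h.1)).1 (Nat.sub_eq_zero_iff_le.1 h1)
      Y ⟨hY, hbY⟩ X ⟨hX, hbX⟩
  ext a
  constructor
  · intro h
    have ha := hbip.mem_A_of_adj hb (G.symm _ _ h)
    have := huniq _ (hf a ha).1 ((hedit a ha).2 (G.symm _ _ h))
    exact ⟨this ▸ (hf a ha).2.1, ha⟩
  · rintro ⟨haX, ha⟩
    have := (hf a ha).2.2 X hX haX
    exact G.symm _ _ ((hedit a ha).1 (this ▸ hbX))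

lemma ConnectedB.mem_of_closed {G : BGraph} (hconn : ConnectedB G) {U : Set ℕ} {b : ℕ}
    (hb : b ∈ verts G) (hbU : b ∈ U) (hU : ∀ u ∈ U, ∀ v, G.Adj u v → v ∈ U) :
    ∀ v ∈ verts G, v ∈ U := by
  intro v hv
  obtain ⟨p⟩ := hconn.preconnected ⟨b, hb⟩ ⟨v, hv⟩
  have key : ∀ (x y : verts G)
      (_ : (SimpleGraph.induce (verts G) (SimpleGraph.fromRel G.Adj)).Walk x y),
      (x : ℕ) ∈ U → (y : ℕ) ∈ U := by
    intro x y q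
    induction q with
    | nil => exact id
    | cons h _ ih =>
      intro hx
      refine ih (hU _ hx _ ?_)
      rcases h.2 with h | h
      · exact h
      · exact G.symm _ _ h
  exact key _ _ p hbU

/-- The neighbourhoods of vertices of `B` are all equal, or each of them occurs near a vertex of
positive weight. -/
lemma nbhd_image_subset {G : BGraph} (hbip : Bipartite G) (hconn : ConnectedB G)
    {C : Set (Set ℕ)} (hC : IsAPartCover G C) {f : ℕ → Set ℕ} (hf : IsPartMap G C f) :
    (∃ S, nbhd G '' G.B ⊆ {S}) ∨
      ∀ b ∈ G.B, ∃ d ∈ G.B, 0 < editWeight G C f d ∧ nbhd G b ∈ nearbyTraces G C f d := by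
  rw [or_iff_not_imp_right]
  push Not
  rintro ⟨b, hb, hfar⟩
  have hb0 : editWeight G C f b = 0 := by
    by_contra h
    exact hfar b hb (Nat.pos_of_ne_zero h) (Set.mem_insert _ _)
  obtain ⟨X, hX, hbX⟩ := hC.2.1 b (Or.inr hb)
  have hN := nbhd_eq_inter_of_editWeight_eq_zero hbip hC.finite hf hb hb0 hX hbX
  refine ⟨X ∩ G.A, ?_⟩
  have hall := hconn.mem_of_closed (U := X ∩ G.A ∪ {d ∈ G.B | nbhd G d = X ∩ G.A})
    (Or.inr hb) (Or.inr ⟨hb, hN⟩) (by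
      rintro a (⟨haX, ha⟩ | ⟨-, hd⟩) v hv
      · right
        have hvB := hbip.mem_B_of_adj ha hv
        refine ⟨hvB, ?_⟩
        have hXa : X = f a := (hf a ha).2.2 X hX haX
        by_cases h0 : editWeight G C f v = 0
        · obtain ⟨Y, hY, hvY⟩ := hC.2.1 v (Or.inr hvB)
          have hNv := nbhd_eq_inter_of_editWeight_eq_zero hbip hC.finite hf hvB h0 hY hvY
          have haY : a ∈ Y ∩ G.A := hNv ▸ G.symm _ _ hv
          rw [hNv, hXa, (hf a ha).2.2 Y hY haY.1]
        · refine absurd ?_ (hfar v hvB (Nat.pos_of_ne_zero h0))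
          rw [hN]
          refine Or.inr ⟨X, ?_, rfl⟩
          by_cases hvX : v ∈ X
          · exact Or.inl ⟨hX, hvX⟩
          · refine Or.inr ⟨a, ⟨ha, fun h => hvX ?_⟩, hXa.symm⟩
            rw [hXa]
            exact h.2 hv
      · left
        exact hd ▸ hv)
  rintro _ ⟨d, hd, rfl⟩
  rcases hall d (Or.inr hd) with h | h
  · exact absurd hd (Set.disjoint_left.1 hbip.1 h.2)
  · exact h.2

lemma ncard_twinClasses_le_ncard_nbhd_image (G : BGraph) :
    {T ∈ twinClasses G | T ⊆ G.B}.ncard ≤ (nbhd G '' G.B).ncard := by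
  have hfin := G.finB.image (nbhd G)
  refine (Set.ncard_le_ncard (t := (fun S => {u ∈ verts G | nbhd G u = S}) '' (nbhd G '' G.B))
    ?_ (hfin.image _)).trans (Set.ncard_image_le hfin)
  rintro T ⟨⟨v, hv, rfl⟩, hT⟩
  exact ⟨nbhd G v, ⟨v, hT ⟨hv, rfl⟩, rfl⟩, rfl⟩

/-- Let `k ≥ 1` and let `G = (A, B, E)` be a connected
bipartite graph all of whose twin classes have size at most `k`, having a
twin-adapted `A`-partitioning cover of cost at most `k`.  Then `G` has at
most `4k⁴` twin classes contained in `B`. -/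
theorem b_twin_classes_bound (G : BGraph) (hbip : Bipartite G)
    (hconn : ConnectedB G) (k : ℕ) (hk : 1 ≤ k)
    (hsize : ∀ T ∈ twinClasses G, T.ncard ≤ k)
    (hcov : ∃ C, IsAPartCover G C ∧ TwinAdapted G C ∧ coverCost G C ≤ k) :
    {T ∈ twinClasses G | T ⊆ G.B}.ncard ≤ 4 * k ^ 4 := by
  classical
  obtain ⟨C, hC, -, hcost⟩ := hcov
  obtain ⟨f, hf⟩ := hC.exists_isPartMap
  have hsum := (sum_editWeight_le_coverCost hbip hf).trans hcost
  refine (ncard_twinClasses_le_ncard_nbhd_image G).trans ?_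
  have hk4 : k ^ 2 ≤ k ^ 4 := Nat.pow_le_pow_right hk (by norm_num)
  have hk2 : k ≤ k ^ 2 := Nat.le_self_pow two_ne_zero k
  rcases nbhd_image_subset hbip hconn hC hf with ⟨S, hS⟩ | hnear
  · have := Set.ncard_le_ncard hS
    rw [Set.ncard_singleton] at this
    omega
  set D := G.finB.toFinset.filter (fun d => 0 < editWeight G C f d) with hD
  have hDsum : ∑ d ∈ D, editWeight G C f d ≤ k :=
    (Finset.sum_le_sum_of_subset (Finset.filter_subset _ _)).trans hsum
  have hDcard : D.card ≤ k := by
    refine le_trans ?_ hDsum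
    rw [Finset.card_eq_sum_ones]
    exact Finset.sum_le_sum fun d hd => (Finset.mem_filter.1 hd).2
  have hfin := fun d => (ncard_nearbyTraces_le (G := G) hC.finite f d).1
  have hsub : nbhd G '' G.B ⊆ (D.biUnion fun d => (hfin d).toFinset : Finset (Set ℕ)) := by
    rintro _ ⟨b, hb, rfl⟩
    obtain ⟨d, hd, hpos, hmem⟩ := hnear b hb
    simp only [Finset.coe_biUnion, Set.mem_iUnion, Set.Finite.coe_toFinset, hD]
    exact ⟨d, by simpa using ⟨hd, hpos⟩, hmem⟩
  have hcard : (nbhd G '' G.B).ncard ≤ ∑ d ∈ D, (editWeight G C f d + 2) := by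
    refine (Set.ncard_le_ncard hsub (Finset.finite_toSet _)).trans ?_
    rw [Set.ncard_coe_finset]
    refine Finset.card_biUnion_le.trans (Finset.sum_le_sum fun d _ => ?_)
    rw [← Set.ncard_eq_toFinset_card _ (hfin d)]
    exact (ncard_nearbyTraces_le hC.finite f d).2
  rw [Finset.sum_add_distrib, Finset.sum_const, smul_eq_mul] at hcard
  omega

end BCE
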